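/- (−v² is an eigenvalue of the VCS Jacobian) Let E>0, g_l>0, n_F ≥ 1, n_I ≥ 2, a>0, b>0, κ_i>0 for i ∈ F, demands P_{0,i}, and g ∈ ℝⁿ_{≥0} with ḡ = Σᵢ gᵢ and v = E·g_l/(ḡ+g_l). Then for any two distinct inflexible indices i, j ∈ I, the nonzero vector u = (u_F, u_I, u_φ, û) with u_F = 0, u_I = e_i − e_j, u_φ = 0, û = 0 satisfies J_SC(g)·u = −v²·u; i.e., −v² is an eigenvalue of J_SC(g) with eigenspace containing the (n_I − 1)-dimensional space of inflexible difference vectors. -/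

import Mathlib

/-- The VCS Jacobian `J_SC(g)` as a matrix on the index type
`(Fin nF ⊕ Fin nI) ⊕ (Unit ⊕ Fin nF)`: the first block indexes the load conductances
(flexible then inflexible), `Unit` indexes the shared state `φ`, and the last block the
controller states `ĝ`. Here `ḡ = Σⱼ gⱼ`, `v = E·g_l/(ḡ+g_l)`, `ΔP̄ = v²·ḡ − Σⱼ P₀ⱼ`, and
`c = (v²·(g_l−ḡ)/(ḡ+g_l))² + ΔP̄·2v²·(ḡ−2g_l)/(ḡ+g_l)²`. -/
noncomputable def JSC (E gl a b : ℝ) {nF nI : ℕ}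
    (P0 : Fin nF ⊕ Fin nI → ℝ) (κ : Fin nF → ℝ) (g : Fin nF ⊕ Fin nI → ℝ) :
    Matrix ((Fin nF ⊕ Fin nI) ⊕ (Unit ⊕ Fin nF))
           ((Fin nF ⊕ Fin nI) ⊕ (Unit ⊕ Fin nF)) ℝ :=
  let gbar : ℝ := ∑ j, g j
  let v : ℝ := E * gl / (gbar + gl)
  let c : ℝ := (v ^ 2 * (gl - gbar) / (gbar + gl)) ^ 2 +
    (v ^ 2 * gbar - ∑ j, P0 j) * (2 * v ^ 2 * (gbar - 2 * gl) / (gbar + gl) ^ 2)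
  fun p q =>
    match p, q with
    | Sum.inl i, Sum.inl j =>
        (2 * v ^ 2 / (gbar + gl)) * g i +
          (match i, j with
           | Sum.inl i', Sum.inl j' => if i' = j' then -(v ^ 2 + b) else 0
           | Sum.inr i', Sum.inr j' => if i' = j' then -(v ^ 2) else 0
           | _, _ => 0)
    | Sum.inl (Sum.inl i'), Sum.inr (Sum.inl _) => -κ i'
    | Sum.inl (Sum.inr _), Sum.inr (Sum.inl _) => 0
    | Sum.inl (Sum.inl i'), Sum.inr (Sum.inr j') => if i' = j' then b else 0
    | Sum.inl (Sum.inr _), Sum.inr (Sum.inr _) => 0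
    | Sum.inr (Sum.inl _), Sum.inl _ => c
    | Sum.inr (Sum.inl _), Sum.inr _ => 0
    | Sum.inr (Sum.inr i'), Sum.inl (Sum.inl j') => if i' = j' then a else 0
    | Sum.inr (Sum.inr _), Sum.inl (Sum.inr _) => 0
    | Sum.inr (Sum.inr i'), Sum.inr (Sum.inr j') => if i' = j' then -a else 0
    | Sum.inr (Sum.inr _), Sum.inr (Sum.inl _) => 0

/-!
Every column of the Jacobian at an inflexible load is the sum of one fixed vector, the
sensitivity to the total perturbation `ū`, and `-v²` times the corresponding unit vector.
On inflexible vectors with zero sum the fixed vector cancels, leaving multiplication by `-v²`.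
-/

open scoped Matrix

theorem mulVec_eq_smul_of_col_eq_add_single {R n : Type*} [NonUnitalNonAssocSemiring R]
    [Fintype n] [DecidableEq n] {A : Matrix n n R} {r w : n → R} {μ : R}
    (hcol : ∀ k, w k ≠ 0 → A.col k = r + Pi.single k μ) (hw : ∑ k, w k = 0) :
    A *ᵥ w = μ • w := by
  have hentry (i k : n) : A i k * w k = (r i + Pi.single (M := fun _ ↦ R) k μ i) * w k := by
    by_cases hk : w k = 0
    · simp only [hk, mul_zero]
    · exact congrArg (· * w k) (congrFun (hcol k hk) i)
  funext i
  calc (A *ᵥ w) i = ∑ k, (r i + Pi.single (M := fun _ ↦ R) k μ i) * w k :=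
        Finset.sum_congr rfl fun k _ ↦ hentry i k
    _ = r i * ∑ k, w k + ∑ k, Pi.single (M := fun _ ↦ R) k μ i * w k := by
        simp only [add_mul, Finset.sum_add_distrib, Finset.mul_sum]
    _ = μ * w i := by simp [hw, Pi.single_apply]

theorem single_sub_single_ne_zero {n G : Type*} [DecidableEq n] [AddGroup G] {i j : n}
    (hij : i ≠ j) {x : G} (hx : x ≠ 0) : (Pi.single i x - Pi.single j x : n → G) ≠ 0 :=
  sub_ne_zero.mpr fun h ↦ hx (by simpa [hij] using congrFun h i)

/-- The perturbation `(0, w, 0, 0)` of the network state, supported on the inflexible loads. -/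
def inflexiblePerturbation (nF : ℕ) {nI : ℕ} (w : Fin nI → ℝ) :
    (Fin nF ⊕ Fin nI) ⊕ (Unit ⊕ Fin nF) → ℝ :=
  Sum.elim (Sum.elim 0 w) (Sum.elim 0 0)

theorem inflexiblePerturbation_ne_zero (nF : ℕ) {nI : ℕ} {w : Fin nI → ℝ} (hw : w ≠ 0) :
    inflexiblePerturbation nF w ≠ 0 :=
  fun h ↦ hw (funext fun k ↦ congrFun h (.inl (.inr k)))

section Jacobian

variable (E gl a b : ℝ) {nF nI : ℕ} (P0 : Fin nF ⊕ Fin nI → ℝ) (κ : Fin nF → ℝ)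
  (g : Fin nF ⊕ Fin nI → ℝ)

/-- The voltage `v = E·g_l/(ḡ+g_l)` at the loads of the star network. -/
noncomputable def loadVoltage : ℝ :=
  E * gl / (∑ k, g k + gl)

/-- The coefficients of the total perturbation `ū` in the rows of the VCS Jacobian, as a vector;
the `φ` entry is the coefficient `c`. -/
noncomputable def totalSensitivity : (Fin nF ⊕ Fin nI) ⊕ (Unit ⊕ Fin nF) → ℝ :=
  let gbar : ℝ := ∑ k, g k
  let v : ℝ := loadVoltage E gl g
  Sum.elim (fun i ↦ 2 * v ^ 2 / (gbar + gl) * g i)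
    (Sum.elim
      (fun _ ↦ (v ^ 2 * (gl - gbar) / (gbar + gl)) ^ 2 +
        (v ^ 2 * gbar - ∑ k, P0 k) * (2 * v ^ 2 * (gbar - 2 * gl) / (gbar + gl) ^ 2))
      0)

theorem JSC_col_inflexible (k : Fin nI) :
    (JSC E gl a b P0 κ g).col (.inl (.inr k)) =
      totalSensitivity E gl P0 g + Pi.single (.inl (.inr k)) (-loadVoltage E gl g ^ 2) := by
  funext p
  rw [Matrix.col_apply]
  rcases p with (i | i) | (_ | i) <;>
    simp [JSC, totalSensitivity, loadVoltage, Pi.single_apply]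

theorem JSC_mulVec_inflexiblePerturbation {w : Fin nI → ℝ} (hw : ∑ k, w k = 0) :
    JSC E gl a b P0 κ g *ᵥ inflexiblePerturbation nF w =
      (-loadVoltage E gl g ^ 2) • inflexiblePerturbation nF w := by
  refine mulVec_eq_smul_of_col_eq_add_single (r := totalSensitivity E gl P0 g) ?_ ?_
  · rintro ((i | k) | (_ | i)) hk
    case inl.inr => exact JSC_col_inflexible E gl a b P0 κ g k
    all_goals exact absurd rfl hk
  · simpa [inflexiblePerturbation, Fintype.sum_sum_type] using hw

theorem stmt_13_general (_hgbar : ∑ k, g k + gl ≠ 0) {w : Fin nI → ℝ} (hw : ∑ k, w k = 0)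
    (hw_ne : w ≠ 0) :
    inflexiblePerturbation nF w ≠ 0 ∧
      JSC E gl a b P0 κ g *ᵥ inflexiblePerturbation nF w =
        (-loadVoltage E gl g ^ 2) • inflexiblePerturbation nF w :=
  ⟨inflexiblePerturbation_ne_zero nF hw_ne,
    JSC_mulVec_inflexiblePerturbation E gl a b P0 κ g hw⟩

end Jacobian

/-- `−v²` is an eigenvalue of the VCS Jacobian: for any two distinct inflexible indices
`i ≠ j`, the nonzero vector `u = (0, eᵢ − eⱼ, 0, 0)` satisfies `J_SC(g)·u = −v²·u`; hence
the eigenspace of `−v²` contains the `(n_I − 1)`-dimensional space of inflexible difference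
vectors. -/
theorem stmt_13 (E gl a b : ℝ) (hE : 0 < E) (hgl : 0 < gl) (ha : 0 < a) (hb : 0 < b)
    (nF nI : ℕ) (hnF : 1 ≤ nF) (hnI : 2 ≤ nI)
    (P0 : Fin nF ⊕ Fin nI → ℝ)
    (κ : Fin nF → ℝ) (hκ : ∀ i, 0 < κ i)
    (g : Fin nF ⊕ Fin nI → ℝ) (hg : ∀ i, 0 ≤ g i)
    (i j : Fin nI) (hij : i ≠ j) :
    ∀ u : ((Fin nF ⊕ Fin nI) ⊕ (Unit ⊕ Fin nF)) → ℝ,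
      u = Sum.elim (Sum.elim (0 : Fin nF → ℝ) (Pi.single i 1 - Pi.single j 1))
            (Sum.elim (0 : Unit → ℝ) (0 : Fin nF → ℝ)) →
      u ≠ 0 ∧
      (JSC E gl a b P0 κ g).mulVec u =
        (-(E * gl / ((∑ k, g k) + gl)) ^ 2) • u := by
  rintro _ rfl
  have hgbar : 0 < ∑ k, g k + gl := add_pos_of_nonneg_of_pos (Finset.sum_nonneg fun k _ ↦ hg k) hgl
  exact stmt_13_general E gl a b P0 κ g hgbar.ne' (by simp)
    (single_sub_single_ne_zero hij one_ne_zero)
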